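/- Let f : I ⊆ (0,∞) → (0,∞) be differentiable on I°, a, b ∈ I° with a < b, f' integrable on [a,b], and let |f'|^q be s-geometrically convex on [a,b] for some q ≥ 1 and s ∈ (0,1]. If |f'(a)| ≤ 1 ≤ |f'(b)|, then |f(a)f(b) − (1/(ln b − ln a)) ∫_a^b (f(x)/x)·f(ab/x) dx| ≤ ln(b/a)·(1/2)^{2−1/q}·[ b·|f'(b)|·M₁·h₁(θ)^{1/q} + a·|f'(a)|^s·|f'(b)|^{1−s}·M₂·h₁(ϑ)^{1/q} ]. -/

import Mathlib

/-!
With `X u = a^(u/2) b^(1-u/2)` and `Y u = a^(1-u/2) b^(u/2)`, the substitution `x = exp v` and the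
symmetry `x ↔ ab/x` turn the mean on the left into `∫₀¹ K`, where `K u = f (X u) f (Y u)` and
`K 0 = f a · f b`. Integrating by parts, `K 0 - ∫₀¹ K = ∫₀¹ (u - 1) K' u du`, so a continuous
bound for `|K'|` suffices.

Since `s l ≤ l^s` and `(1 - l)^s ≤ 1 - s l` on `[0, 1]`, convexity together with
`|f' a| ≤ 1 ≤ |f' b|` gives `|f' (a^l b^(1-l))| ≤ |f' a|^(s l) |f' b|^(1 - s l)`
(`abs_le_of_geom_convex`); this bounds `|K' u|` by a combination of
`θ^(u/q)` and `ϑ^(u/q)`, where `θ` and `ϑ = 1/θ` are the two arguments of `h₁` in the theorem.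
Finally `∫₀¹ (1 - u) θ^u du = h₁ θ`, and the passage from `θ^(1/q)` to `θ` is the power mean
inequality for the weight `1 - u` (`integral_one_sub_mul_rpow_le`).

The bounds need `f' a ≠ 0`, which follows from Darboux's theorem (`abs_pos_of_geom_convex`).
-/

open Real MeasureTheory Set intervalIntegral

noncomputable def h₁ (u : ℝ) : ℝ :=
  if u = 1 then 1/2 else (u - Real.log u - 1) / (Real.log u) ^ 2

/-! ### The integral representation of `h₁` -/

/-- `h₁ t` is the exponential moment of the weight `1 - u`; the value `1/2` at `t = 1` is the total
mass of that weight. -/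
lemma integral_one_sub_mul_rpow {t : ℝ} (ht : 0 < t) :
    ∫ u in (0:ℝ)..1, (1 - u) * t ^ u = h₁ t := by
  unfold h₁
  split_ifs with h1
  · subst h1
    simp only [one_rpow, mul_one]
    rw [intervalIntegral.integral_sub (by simp) (by simp)]
    simp
    norm_num
  · have hc : Real.log t ≠ 0 := Real.log_ne_zero_of_pos_of_ne_one ht h1
    have hd : ∀ u ∈ uIcc (0:ℝ) 1,
        HasDerivAt (fun u : ℝ => (1 - u) * t ^ u / Real.log t + t ^ u / Real.log t ^ 2)
          ((1 - u) * t ^ u) u := by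
      intro u _
      have e : HasDerivAt (fun u : ℝ => t ^ u) (t ^ u * Real.log t) u := by
        simpa using (hasStrictDerivAt_const_rpow ht u).hasDerivAt
      have := ((((hasDerivAt_id' u).const_sub 1).mul e).div_const (Real.log t)).add
        (e.div_const (Real.log t ^ 2))
      refine this.congr_deriv ?_
      field_simp
      ring
    have hcont : Continuous (fun u : ℝ => t ^ u) := Real.continuous_const_rpow ht.ne'
    rw [intervalIntegral.integral_eq_sub_of_hasDerivAt hd
      (Continuous.intervalIntegrable (by fun_prop) _ _)]
    simp
    field_simp
    ring

lemma h₁_pos {t : ℝ} (ht : 0 < t) : 0 < h₁ t := by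
  unfold h₁
  split_ifs with h1
  · norm_num
  · have hc : Real.log t ≠ 0 := Real.log_ne_zero_of_pos_of_ne_one ht h1
    have := Real.log_lt_sub_one_of_pos ht h1
    have : 0 < t - Real.log t - 1 := by linarith
    positivity

/-- The power mean inequality for the weight `1 - u` on `[0, 1]`, applied to `u ↦ t ^ u`. -/
lemma integral_one_sub_mul_rpow_le {t q : ℝ} (ht : 0 < t) (hq : 1 ≤ q) :
    ∫ u in (0:ℝ)..1, (1 - u) * (t ^ (1 / q)) ^ u ≤ (1 / 2 : ℝ) ^ (1 - 1 / q) * h₁ t ^ (1 / q) := by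
  have hq0 : 0 < q := by linarith
  have hq1 : 1 / q ≤ 1 := by rw [div_le_one hq0]; exact hq
  have hh := h₁_pos ht
  set c : ℝ := 2 * h₁ t with hcdef
  have hc : 0 < c := by positivity
  have hcont : Continuous (fun u : ℝ => t ^ u) := Real.continuous_const_rpow ht.ne'
  have htq : 0 < t ^ (1 / q) := by positivity
  have hcont' : Continuous (fun u : ℝ => (t ^ (1 / q)) ^ u) := Real.continuous_const_rpow htq.ne'
  have hlin : ∫ u in (0:ℝ)..1, (1 - u) = 1 / 2 := by
    rw [intervalIntegral.integral_sub (by simp) (by simp)]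
    simp
    norm_num
  -- Young's inequality against the constant `c`, for which equality holds on average
  have key : c ^ (1 - 1 / q) * ∫ u in (0:ℝ)..1, (1 - u) * (t ^ (1 / q)) ^ u ≤ h₁ t := by
    calc c ^ (1 - 1 / q) * ∫ u in (0:ℝ)..1, (1 - u) * (t ^ (1 / q)) ^ u
        = ∫ u in (0:ℝ)..1, c ^ (1 - 1 / q) * ((1 - u) * (t ^ (1 / q)) ^ u) := by
          rw [intervalIntegral.integral_const_mul]
      _ ≤ ∫ u in (0:ℝ)..1, (1 / q * ((1 - u) * t ^ u) + (1 - 1 / q) * c * (1 - u)) := by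
          apply intervalIntegral.integral_mono_on zero_le_one
          · exact Continuous.intervalIntegrable (by fun_prop) _ _
          · exact Continuous.intervalIntegrable (by fun_prop) _ _
          · intro u hu
            have hy := Real.geom_mean_le_arith_mean2_weighted (w₁ := 1 / q) (w₂ := 1 - 1 / q)
              (p₁ := t ^ u) (p₂ := c) (by positivity) (by linarith) (by positivity) hc.le (by ring)
            have e : (t ^ (1 / q)) ^ u = (t ^ u) ^ (1 / q) := by
              rw [← Real.rpow_mul ht.le, ← Real.rpow_mul ht.le, mul_comm]
            rw [e]
            have := mul_le_mul_of_nonneg_left hy (show 0 ≤ 1 - u by linarith [hu.2])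
            linarith
      _ = h₁ t := by
          rw [intervalIntegral.integral_add (Continuous.intervalIntegrable (by fun_prop) _ _)
            (Continuous.intervalIntegrable (by fun_prop) _ _),
            intervalIntegral.integral_const_mul, intervalIntegral.integral_const_mul,
            integral_one_sub_mul_rpow ht, hlin, hcdef]
          ring
  have e : (1 / 2 : ℝ) ^ (1 - 1 / q) * h₁ t ^ (1 / q) = h₁ t / c ^ (1 - 1 / q) := by
    rw [hcdef, Real.mul_rpow (by norm_num) hh.le, Real.rpow_sub hh, Real.rpow_one,
      Real.div_rpow (by norm_num) (by norm_num), Real.one_rpow]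
    have : 0 < h₁ t ^ (1 / q) := by positivity
    field_simp
  rw [e, le_div_iff₀ (by positivity)]
  linarith

/-! ### Integration by parts and change of variables -/

/-- Integration by parts, `K 0 - ∫₀¹ K = ∫₀¹ (u - 1) K'`, in the form of an estimate that does not
ask `K'` to be integrable. -/
lemma abs_sub_integral_le {K K' B : ℝ → ℝ} (hK : ∀ u ∈ Icc (0:ℝ) 1, HasDerivAt K (K' u) u)
    (hB : Continuous B) (hKB : ∀ u ∈ Icc (0:ℝ) 1, |K' u| ≤ B u) :
    |K 0 - ∫ u in (0:ℝ)..1, K u| ≤ ∫ u in (0:ℝ)..1, (1 - u) * B u := by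
  have hKc : ContinuousOn K (Icc 0 1) := fun u hu => (hK u hu).continuousAt.continuousWithinAt
  have hKi : IntervalIntegrable K volume 0 1 := by
    apply ContinuousOn.intervalIntegrable
    rwa [uIcc_of_le zero_le_one]
  set F : ℝ → ℝ := fun u => (u - 1) * K u - ∫ v in (0:ℝ)..u, K v with hF
  have hd : ∀ u ∈ Ioo (0:ℝ) 1, HasDerivAt F ((u - 1) * K' u) u := by
    intro u hu
    have h1 : HasDerivAt (fun u => ∫ v in (0:ℝ)..u, K v) (K u) u := by
      apply intervalIntegral.integral_hasDerivAt_right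
      · apply hKi.mono_set
        rw [uIcc_of_le hu.1.le, uIcc_of_le zero_le_one]
        exact Icc_subset_Icc le_rfl hu.2.le
      · exact (hKc.mono Ioo_subset_Icc_self).stronglyMeasurableAtFilter isOpen_Ioo u hu
      · exact (hK u (Ioo_subset_Icc_self hu)).continuousAt
    have := (((hasDerivAt_id' u).sub_const 1).mul (hK u (Ioo_subset_Icc_self hu))).sub h1
    exact this.congr_deriv (by ring)
  have hmain := norm_sub_le_integral_of_norm_deriv_le_of_le (f := F) (a := 0) (b := 1)
    (B := fun u => (1 - u) * B u) zero_le_one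
    (by
      apply ContinuousOn.sub (by fun_prop)
      have := intervalIntegral.continuousOn_primitive_interval (f := K) (a := 0) (b := 1)
        (μ := volume) (by
          rw [uIcc_of_le zero_le_one]
          exact hKc.integrableOn_Icc)
      rwa [uIcc_of_le zero_le_one] at this)
    (fun u hu => (hd u hu).differentiableAt.differentiableWithinAt)
    (Filter.Eventually.of_forall fun u hu => by
      rw [(hd u hu).deriv, Real.norm_eq_abs, abs_mul, abs_of_nonpos (by linarith [hu.2])]
      have := hKB u (Ioo_subset_Icc_self hu)
      nlinarith [hu.2])
    (Continuous.intervalIntegrable (by fun_prop) _ _)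
  have e : F 1 - F 0 = K 0 - ∫ u in (0:ℝ)..1, K u := by simp [hF]; ring
  rwa [e, Real.norm_eq_abs] at hmain

/-- The factor `f x * f (a * b / x)` is invariant under `x ↦ a * b / x`, so the integral is twice
the one over `[√(a * b), b]`, which the points `a ^ (u / 2) * b ^ (1 - u / 2)` sweep out. -/
lemma integral_div_mul_eq {f : ℝ → ℝ} {a b : ℝ} (ha : 0 < a) (hab : a < b)
    (hf : ContinuousOn f (Icc a b)) :
    ∫ x in a..b, (f x / x) * f (a * b / x) = (Real.log b - Real.log a) *
      ∫ u in (0:ℝ)..1, f (a ^ (u / 2) * b ^ (1 - u / 2)) * f (a ^ (1 - u / 2) * b ^ (u / 2)) := by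
  have hb : 0 < b := ha.trans hab
  set α := Real.log a with hα
  set β := Real.log b with hβ
  have hαβ : α < β := Real.log_lt_log ha hab
  have eα : Real.exp α = a := Real.exp_log ha
  have eβ : Real.exp β = b := Real.exp_log hb
  have hmem : ∀ v ∈ Icc α β, Real.exp v ∈ Icc a b := fun v hv =>
    ⟨eα ▸ Real.exp_le_exp.2 hv.1, eβ ▸ Real.exp_le_exp.2 hv.2⟩
  set H : ℝ → ℝ := fun v => f (Real.exp v) * f (Real.exp (α + β - v)) with hH
  have hHc : ContinuousOn H (Icc α β) := by
    apply ContinuousOn.mul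
    · exact hf.comp (by fun_prop) hmem
    · refine hf.comp (by fun_prop) (fun v hv => hmem _ ⟨by linarith [hv.2], by linarith [hv.1]⟩)
  have hHi : ∀ c ∈ Icc α β, ∀ d ∈ Icc α β, IntervalIntegrable H volume c d := fun c hc d hd =>
    (hHc.mono (uIcc_subset_Icc hc hd)).intervalIntegrable
  have s1 : ∫ x in a..b, (f x / x) * f (a * b / x) = ∫ v in α..β, H v := by
    have := intervalIntegral.integral_comp_mul_deriv'' (a := α) (b := β) (f := Real.exp)
      (f' := Real.exp) (g := fun x => (f x / x) * f (a * b / x)) (by fun_prop)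
      (fun x _ => (Real.hasDerivAt_exp x).hasDerivWithinAt) (by fun_prop)
      (by
        rw [uIcc_of_le hαβ.le]
        have : Real.exp '' Icc α β ⊆ Icc a b := by rintro _ ⟨v, hv, rfl⟩; exact hmem v hv
        refine ContinuousOn.mono ?_ this
        have hx0 : ∀ x ∈ Icc a b, x ≠ 0 := fun x hx => (ha.trans_le hx.1).ne'
        refine (hf.div continuousOn_id hx0).mul ?_
        refine hf.comp (continuousOn_const.div continuousOn_id hx0) ?_
        intro x hx
        have hx' := ha.trans_le hx.1
        constructor
        · rw [le_div_iff₀ hx']; exact mul_le_mul_of_nonneg_left hx.2 ha.le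
        · rw [div_le_iff₀ hx', mul_comm b]
          exact mul_le_mul_of_nonneg_right hx.1 hb.le)
    rw [eα, eβ] at this
    rw [← this]
    refine intervalIntegral.integral_congr fun v _ => ?_
    simp only [hH, Function.comp]
    rw [Real.exp_sub, Real.exp_add, eα, eβ]
    field_simp
  set m := (α + β) / 2 with hm
  have hm1 : α ≤ m := by rw [hm]; linarith
  have hm2 : m ≤ β := by rw [hm]; linarith
  -- `H` is symmetric about the midpoint `m`
  have s2 : ∫ v in α..m, H v = ∫ v in m..β, H v := by
    have := intervalIntegral.integral_comp_sub_left (a := α) (b := m) H (α + β)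
    rw [show α + β - m = m by rw [hm]; ring, show α + β - α = β by ring] at this
    rw [← this]
    refine intervalIntegral.integral_congr fun v _ => ?_
    simp only [hH]
    rw [show α + β - (α + β - v) = v by ring, mul_comm]
  have s3 : ∫ v in m..β, H v = ((β - α) / 2) * ∫ u in (0:ℝ)..1, H (β - (β - α) / 2 * u) := by
    have := intervalIntegral.smul_integral_comp_sub_mul (a := 0) (b := 1) H ((β - α) / 2) β
    rw [smul_eq_mul, show β - (β - α) / 2 * 1 = m by rw [hm]; ring,
      show β - (β - α) / 2 * 0 = β by ring] at this
    exact this.symm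
  rw [s1, ← intervalIntegral.integral_add_adjacent_intervals
    (hHi α ⟨le_rfl, hαβ.le⟩ m ⟨hm1, hm2⟩) (hHi m ⟨hm1, hm2⟩ β ⟨hαβ.le, le_rfl⟩), s2, s3]
  have : ∀ u : ℝ, H (β - (β - α) / 2 * u) =
      f (a ^ (u / 2) * b ^ (1 - u / 2)) * f (a ^ (1 - u / 2) * b ^ (u / 2)) := by
    intro u
    simp only [hH]
    rw [Real.rpow_def_of_pos ha, Real.rpow_def_of_pos hb, Real.rpow_def_of_pos ha,
      Real.rpow_def_of_pos hb, ← Real.exp_add, ← Real.exp_add, ← hα, ← hβ]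
    congr 3 <;> ring
  simp only [this]
  ring

/-! ### Consequences of `s`-geometric convexity -/

/-- The exponents `l ^ s` and `(1 - l) ^ s` are replaced by affine ones: `s * l ≤ l ^ s` serves the
base `|g a| ≤ 1`, and Bernoulli's inequality `(1 - l) ^ s ≤ 1 - s * l` the base `|g b| ≥ 1`. -/
lemma abs_le_of_geom_convex {g : ℝ → ℝ} {a b q s l : ℝ} (hab : a ≤ b)
    (hq : 1 ≤ q) (hs : s ∈ Ioc (0:ℝ) 1)
    (hconv : ∀ x ∈ Icc a b, ∀ y ∈ Icc a b, ∀ l ∈ Icc (0:ℝ) 1,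
      |g (x ^ l * y ^ (1 - l))| ^ q ≤ (|g x| ^ q) ^ (l ^ s) * (|g y| ^ q) ^ ((1 - l) ^ s))
    (ha0 : 0 < |g a|) (hga : |g a| ≤ 1) (hgb : 1 ≤ |g b|) (hl : l ∈ Icc (0:ℝ) 1) :
    |g (a ^ l * b ^ (1 - l))| ≤ |g a| ^ (s * l) * |g b| ^ (1 - s * l) := by
  have hq0 : 0 < q := by linarith
  have hb0 : 0 < |g b| := by linarith
  have h := hconv a ⟨le_rfl, hab⟩ b ⟨hab, le_rfl⟩ l hl
  rw [← Real.rpow_le_rpow_iff (abs_nonneg _) (by positivity) hq0]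
  refine h.trans ?_
  rw [Real.mul_rpow (by positivity) (by positivity), ← Real.rpow_mul ha0.le,
    ← Real.rpow_mul hb0.le, ← Real.rpow_mul ha0.le, ← Real.rpow_mul hb0.le]
  have e1 : s * l ≤ l ^ s :=
    (mul_le_of_le_one_left hl.1 hs.2).trans (Real.self_le_rpow_of_le_one hl.1 hl.2 hs.2)
  have e2 : (1 - l) ^ s ≤ 1 - s * l := by
    have := rpow_one_add_le_one_add_mul_self (s := -l) (by linarith [hl.2]) hs.1.le hs.2
    rw [← sub_eq_add_neg] at this
    linarith
  apply mul_le_mul _ _ (by positivity) (by positivity)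
  · exact Real.rpow_le_rpow_of_exponent_ge ha0 hga (by nlinarith)
  · exact Real.rpow_le_rpow_of_exponent_le hgb (by nlinarith)

/-- A derivative with `|g|ᵠ` `s`-geometrically convex cannot vanish at `a` without vanishing on
`[a, b)`, and then also at `b` by Darboux's theorem. -/
lemma abs_pos_of_geom_convex {f g : ℝ → ℝ} {a b q s : ℝ} (ha : 0 < a) (hab : a < b)
    (hf : ∀ x ∈ Icc a b, HasDerivAt f (g x) x)
    (hq : 1 ≤ q)
    (hconv : ∀ x ∈ Icc a b, ∀ y ∈ Icc a b, ∀ l ∈ Icc (0:ℝ) 1,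
      |g (x ^ l * y ^ (1 - l))| ^ q ≤ (|g x| ^ q) ^ (l ^ s) * (|g y| ^ q) ^ ((1 - l) ^ s))
    (hgb : 1 ≤ |g b|) : 0 < |g a| := by
  have hb : 0 < b := ha.trans hab
  by_contra hcon
  have hga : g a = 0 := by
    rw [abs_pos, not_not] at hcon; exact hcon
  have hq0 : q ≠ 0 := by linarith
  have hgb0 : g b ≠ 0 := by
    intro h; rw [h, abs_zero] at hgb; linarith
  have hz : ∀ z ∈ Icc a b, z ≠ b → g z = 0 := by
    intro z hz hzb
    have hzlt : z < b := lt_of_le_of_ne hz.2 hzb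
    have hz0 : 0 < z := ha.trans_le hz.1
    have hL : 0 < Real.log b - Real.log a := sub_pos.2 (Real.log_lt_log ha hab)
    have h1 : 0 < Real.log b - Real.log z := sub_pos.2 (Real.log_lt_log hz0 hzlt)
    have h2 : Real.log a ≤ Real.log z := Real.log_le_log ha hz.1
    set l := (Real.log b - Real.log z) / (Real.log b - Real.log a) with hl
    have hl0 : 0 < l := by positivity
    have hl1 : l ≤ 1 := by rw [hl, div_le_one hL]; linarith
    have hzl : a ^ l * b ^ (1 - l) = z := by
      rw [Real.rpow_def_of_pos ha, Real.rpow_def_of_pos hb, ← Real.exp_add]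
      have : Real.log a * l + Real.log b * (1 - l) = Real.log z := by
        rw [hl]; field_simp; ring
      rw [this, Real.exp_log hz0]
    have h := hconv a ⟨le_rfl, hab.le⟩ b ⟨hab.le, le_rfl⟩ l ⟨hl0.le, hl1⟩
    rw [hzl, hga, abs_zero, Real.zero_rpow hq0,
      Real.zero_rpow (Real.rpow_pos_of_pos hl0 s).ne', zero_mul] at h
    have h0 : |g z| ^ q = 0 := le_antisymm h (by positivity)
    exact abs_eq_zero.1 ((Real.rpow_eq_zero (abs_nonneg _) hq0).1 h0)
  have hD := (ordConnected_Icc (a := a) (b := b)).image_hasDerivWithinAt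
    (fun x hx => (hf x hx).hasDerivWithinAt)
  have hmem : g b / 2 ∈ uIcc (g a) (g b) := by
    rw [hga, mem_uIcc]
    rcases le_total 0 (g b) with h | h
    · left; constructor <;> linarith
    · right; constructor <;> linarith
  obtain ⟨z, hz1, hz2⟩ := hD.uIcc_subset (mem_image_of_mem g ⟨le_rfl, hab.le⟩)
    (mem_image_of_mem g ⟨hab.le, le_rfl⟩) hmem
  by_cases hzb : z = b
  · rw [hzb] at hz2
    exact hgb0 (by linarith)
  · rw [hz z hz1 hzb] at hz2
    exact hgb0 (by linarith)

/-! ### The parametrization by weighted geometric means -/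

lemma hasDerivAt_rpow_mul_rpow {a b : ℝ} (ha : 0 < a) (hb : 0 < b) (u : ℝ) :
    HasDerivAt (fun u : ℝ => a ^ (u / 2) * b ^ (1 - u / 2))
      (-((Real.log b - Real.log a) / 2 * (a ^ (u / 2) * b ^ (1 - u / 2)))) u := by
  have e : ∀ u : ℝ, a ^ (u / 2) * b ^ (1 - u / 2) =
      Real.exp (Real.log b - u * ((Real.log b - Real.log a) / 2)) := by
    intro u
    rw [Real.rpow_def_of_pos ha, Real.rpow_def_of_pos hb, ← Real.exp_add]
    congr 1; ring
  simp only [e]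
  have := (((hasDerivAt_id' u).mul_const ((Real.log b - Real.log a) / 2)).const_sub
    (Real.log b)).exp
  exact this.congr_deriv (by ring)

lemma rpow_mul_rpow_mem {a b u : ℝ} (ha : 0 < a) (hab : a ≤ b) (hu : u ∈ Icc (0:ℝ) 1) :
    a ^ (u / 2) * b ^ (1 - u / 2) ∈ Icc (√(a * b)) b ∧
      a ^ (1 - u / 2) * b ^ (u / 2) ∈ Icc a (√(a * b)) := by
  have hb : 0 < b := ha.trans_le hab
  have hlog := Real.log_le_log ha hab
  have hs : √(a * b) = Real.exp ((Real.log a + Real.log b) / 2) := by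
    rw [Real.sqrt_eq_rpow, Real.rpow_def_of_pos (by positivity), Real.log_mul ha.ne' hb.ne']
    congr 1; ring
  rw [Real.rpow_def_of_pos ha, Real.rpow_def_of_pos hb, Real.rpow_def_of_pos ha,
    Real.rpow_def_of_pos hb, ← Real.exp_add, ← Real.exp_add, hs]
  obtain ⟨h0, h1⟩ := hu
  refine ⟨⟨Real.exp_le_exp.2 (by nlinarith), ?_⟩, ?_, Real.exp_le_exp.2 (by nlinarith)⟩
  · conv_rhs => rw [← Real.exp_log hb]
    exact Real.exp_le_exp.2 (by nlinarith)
  · conv_lhs => rw [← Real.exp_log ha]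
    exact Real.exp_le_exp.2 (by nlinarith)

/-! ### The inequality -/

theorem stmt_4 (I : Set ℝ) (hI : I ⊆ Set.Ioi (0:ℝ)) (hI' : I.OrdConnected)
    (f f' : ℝ → ℝ) (a b : ℝ) (ha : a ∈ interior I) (hb : b ∈ interior I) (hab : a < b)
    (hf : ∀ x ∈ interior I, HasDerivAt f (f' x) x)
    (hint : IntervalIntegrable f' volume a b)
    (hpos : ∀ x ∈ I, 0 < f x)
    (q s : ℝ) (hq : 1 ≤ q) (hs : s ∈ Set.Ioc (0:ℝ) 1)
    (hconv : ∀ x ∈ Set.Icc a b, ∀ y ∈ Set.Icc a b, ∀ l ∈ Set.Icc (0:ℝ) 1,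
      |f' (x ^ l * y ^ (1 - l))| ^ q ≤ (|f' x| ^ q) ^ (l ^ s) * (|f' y| ^ q) ^ ((1 - l) ^ s))
    (M₁ M₂ : ℝ)
    (hM₁ : IsGreatest ((fun x => |f x|) '' Set.Icc a (Real.sqrt (a*b))) M₁)
    (hM₂ : IsGreatest ((fun x => |f x|) '' Set.Icc (Real.sqrt (a*b)) b) M₂)
    (hfa : |f' a| ≤ 1) (hfb : 1 ≤ |f' b|) :
    |f a * f b - (1 / (Real.log b - Real.log a)) * ∫ x in a..b, (f x / x) * f (a * b / x)|
      ≤ Real.log (b / a) * ((1:ℝ) / 2) ^ (2 - 1 / q) *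
        (b * |f' b| * M₁ * (h₁ ((a * |f' a| ^ s / (b * |f' b| ^ s)) ^ (q / 2))) ^ (1 / q)
          + a * |f' a| ^ s * |f' b| ^ (1 - s) * M₂ * (h₁ ((b * |f' b| ^ s / (a * |f' a| ^ s)) ^ (q / 2))) ^ (1 / q)) := by
  have ha0 : 0 < a := hI (interior_subset ha)
  have hb0 : 0 < b := ha0.trans hab
  have hsub : Icc a b ⊆ interior I := hI'.interior.out ha hb
  have hfd : ∀ x ∈ Icc a b, HasDerivAt f (f' x) x := fun x hx => hf x (hsub hx)
  have hfc : ContinuousOn f (Icc a b) := fun x hx => (hfd x hx).continuousAt.continuousWithinAt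
  have hA : 0 < |f' a| := abs_pos_of_geom_convex ha0 hab hfd hq hconv hfb
  have hC : 0 < |f' b| := by linarith
  have hbd := fun (l : ℝ) (hl : l ∈ Icc (0:ℝ) 1) =>
    abs_le_of_geom_convex hab.le hq hs hconv hA hfa hfb hl
  set A := |f' a| with hAdef
  set C := |f' b| with hCdef
  set L := Real.log b - Real.log a with hLdef
  have hL : 0 < L := sub_pos.2 (Real.log_lt_log ha0 hab)
  have hLd : Real.log (b / a) = L := Real.log_div hb0.ne' ha0.ne'
  have hq0 : 0 < q := by linarith
  have hsq1 : a ≤ √(a * b) := Real.le_sqrt_of_sq_le (by nlinarith)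
  have hsq2 : √(a * b) ≤ b := Real.sqrt_le_iff.2 ⟨hb0.le, by nlinarith⟩
  set T := a * A ^ s / (b * C ^ s) with hT
  set S := b * C ^ s / (a * A ^ s) with hS
  have hT0 : 0 < T := by positivity
  have hS0 : 0 < S := by positivity
  set X : ℝ → ℝ := fun u => a ^ (u / 2) * b ^ (1 - u / 2) with hX
  set Y : ℝ → ℝ := fun u => a ^ (1 - u / 2) * b ^ (u / 2) with hY
  have hXmem : ∀ u ∈ Icc (0:ℝ) 1, X u ∈ Icc (√(a * b)) b := fun u hu =>
    (rpow_mul_rpow_mem ha0 hab.le hu).1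
  have hYmem : ∀ u ∈ Icc (0:ℝ) 1, Y u ∈ Icc a (√(a * b)) := fun u hu =>
    (rpow_mul_rpow_mem ha0 hab.le hu).2
  have hXd : ∀ u, HasDerivAt X (-(L / 2 * X u)) u := hasDerivAt_rpow_mul_rpow ha0 hb0
  have hYd : ∀ u, HasDerivAt Y (L / 2 * Y u) u := by
    intro u
    have e : ∀ u : ℝ, b ^ (u / 2) * a ^ (1 - u / 2) = Y u := fun u => mul_comm _ _
    have := hasDerivAt_rpow_mul_rpow hb0 ha0 u
    simp only [e] at this
    convert this using 1
    rw [hLdef]; ring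
  have hM1 : ∀ u ∈ Icc (0:ℝ) 1, |f (Y u)| ≤ M₁ := fun u hu => hM₁.2 ⟨Y u, hYmem u hu, rfl⟩
  have hM2 : ∀ u ∈ Icc (0:ℝ) 1, |f (X u)| ≤ M₂ := fun u hu => hM₂.2 ⟨X u, hXmem u hu, rfl⟩
  have hM10 : 0 ≤ M₁ := (abs_nonneg _).trans (hM1 0 (by simp))
  have hM20 : 0 ≤ M₂ := (abs_nonneg _).trans (hM2 0 (by simp))
  have hX0 : ∀ u, 0 < X u := fun u => by positivity
  have hY0 : ∀ u, 0 < Y u := fun u => by positivity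
  have hT' : (T ^ (q / 2)) ^ (1 / q) = T ^ (1 / 2 : ℝ) := by
    rw [← Real.rpow_mul hT0.le]; congr 1; field_simp
  have hS' : (S ^ (q / 2)) ^ (1 / q) = S ^ (1 / 2 : ℝ) := by
    rw [← Real.rpow_mul hS0.le]; congr 1; field_simp
  have hfX : ∀ u ∈ Icc (0:ℝ) 1, |f' (X u)| * X u ≤ b * C * (T ^ (1 / 2 : ℝ)) ^ u := by
    intro u hu
    have h := mul_le_mul_of_nonneg_right
      (hbd (u / 2) ⟨by linarith [hu.1], by linarith [hu.2]⟩) (hX0 u).le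
    refine h.trans (le_of_eq ?_)
    simp only [hX, hT]
    rw [← Real.rpow_mul (by positivity), Real.div_rpow (by positivity) (by positivity),
      Real.mul_rpow (by positivity) (by positivity), Real.mul_rpow (by positivity) (by positivity),
      ← Real.rpow_mul hA.le, ← Real.rpow_mul hC.le, Real.rpow_sub hC, Real.rpow_sub hb0,
      Real.rpow_one, Real.rpow_one, show (1 / 2 * u) = u / 2 by ring]
    field_simp
  have hfY : ∀ u ∈ Icc (0:ℝ) 1,
      |f' (Y u)| * Y u ≤ a * A ^ s * C ^ (1 - s) * (S ^ (1 / 2 : ℝ)) ^ u := by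
    intro u hu
    have h := hbd (1 - u / 2) ⟨by linarith [hu.2], by linarith [hu.1]⟩
    rw [show 1 - (1 - u / 2) = u / 2 by ring] at h
    have h := mul_le_mul_of_nonneg_right h (hY0 u).le
    refine h.trans (le_of_eq ?_)
    simp only [hY, hS]
    rw [← Real.rpow_mul (by positivity), Real.div_rpow (by positivity) (by positivity),
      Real.mul_rpow (by positivity) (by positivity), Real.mul_rpow (by positivity) (by positivity),
      ← Real.rpow_mul hA.le, ← Real.rpow_mul hC.le,
      show s * (1 - u / 2) = s - s * (u / 2) by ring,
      show 1 - (s - s * (u / 2)) = 1 - s + s * (u / 2) by ring,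
      Real.rpow_sub hA, Real.rpow_add hC, Real.rpow_sub ha0, 
      Real.rpow_one, show (1 / 2 * u) = u / 2 by ring]
    field_simp
  set B : ℝ → ℝ := fun u => L / 2 * (b * C * M₁ * (T ^ (1 / 2 : ℝ)) ^ u
    + a * A ^ s * C ^ (1 - s) * M₂ * (S ^ (1 / 2 : ℝ)) ^ u) with hB
  have hTc : Continuous (fun u : ℝ => (T ^ (1 / 2 : ℝ)) ^ u) :=
    Real.continuous_const_rpow (by positivity)
  have hSc : Continuous (fun u : ℝ => (S ^ (1 / 2 : ℝ)) ^ u) :=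
    Real.continuous_const_rpow (by positivity)
  have hBc : Continuous B := by fun_prop
  have hmain := abs_sub_integral_le (K := fun u => f (X u) * f (Y u))
    (K' := fun u => f' (X u) * (-(L / 2 * X u)) * f (Y u) + f (X u) * (f' (Y u) * (L / 2 * Y u)))
    (B := B)
    (fun u hu => by
      have h1 : HasDerivAt f (f' (X u)) (X u) :=
        hfd _ ⟨hsq1.trans (hXmem u hu).1, (hXmem u hu).2⟩
      have h2 : HasDerivAt f (f' (Y u)) (Y u) :=
        hfd _ ⟨(hYmem u hu).1, (hYmem u hu).2.trans hsq2⟩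
      exact (h1.comp u (hXd u)).mul (h2.comp u (hYd u)))
    hBc
    (fun u hu => by
      refine (abs_add_le _ _).trans ?_
      simp only [abs_mul, abs_neg, abs_of_pos (hX0 u), abs_of_pos (hY0 u),
        abs_of_pos (show 0 < L / 2 by positivity)]
      have p1 := mul_le_mul (hfX u hu) (hM1 u hu) (abs_nonneg _) (by positivity)
      have p2 := mul_le_mul (hfY u hu) (hM2 u hu) (abs_nonneg _) (by positivity)
      have p3 := mul_le_mul_of_nonneg_left (add_le_add p1 p2) (show 0 ≤ L / 2 by positivity)
      simp only [hB]
      linarith)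
  have hint1 := integral_one_sub_mul_rpow_le (t := T ^ (q / 2)) (by positivity) hq
  have hint2 := integral_one_sub_mul_rpow_le (t := S ^ (q / 2)) (by positivity) hq
  rw [hT'] at hint1
  rw [hS'] at hint2
  rw [integral_div_mul_eq ha0 hab hfc, ← hLdef, ← mul_assoc, one_div_mul_cancel hL.ne', one_mul,
    hLd]
  have hK0 : f (X 0) * f (Y 0) = f a * f b := by
    simp [hX, hY, mul_comm]
  simp only [hK0] at hmain
  refine hmain.trans ?_
  have hsplit : ∫ u in (0:ℝ)..1, (1 - u) * B u
      = L / 2 * (b * C * M₁ * ∫ u in (0:ℝ)..1, (1 - u) * (T ^ (1 / 2 : ℝ)) ^ u)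
      + L / 2 * (a * A ^ s * C ^ (1 - s) * M₂ * ∫ u in (0:ℝ)..1, (1 - u) * (S ^ (1 / 2 : ℝ)) ^ u) := by
    simp only [← intervalIntegral.integral_const_mul]
    rw [← intervalIntegral.integral_add (Continuous.intervalIntegrable (by fun_prop) _ _)
      (Continuous.intervalIntegrable (by fun_prop) _ _)]
    refine intervalIntegral.integral_congr fun u _ => ?_
    simp only [hB]
    ring
  rw [hsplit]
  have p1 := mul_le_mul_of_nonneg_left hint1 (show 0 ≤ L / 2 * (b * C * M₁) by positivity)
  have p2 := mul_le_mul_of_nonneg_left hint2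
    (show 0 ≤ L / 2 * (a * A ^ s * C ^ (1 - s) * M₂) by positivity)
  have e : ((1:ℝ) / 2) ^ (2 - 1 / q) = 1 / 2 * (1 / 2) ^ (1 - 1 / q) := by
    rw [show 2 - 1 / q = 1 + (1 - 1 / q) by ring, Real.rpow_add (by norm_num), Real.rpow_one]
  rw [e]
  linarith
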